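/- Define K : ℝ × ℝ → ℝ by K(x, y) = 1 + (x − 1/2)(y − 1/2) + (|x − y|² − |x − y| + 1/6)/2. Fix an integer n ≥ 2 and define weights w*_0 = 6n²/(12n³ + n + 3), w*_k = 12n²/(12n³ + n + 3) for 1 ≤ k ≤ n − 2, and w*_{n-1} = 18n²/(12n³ + n + 3). Then ∫_0^1 (1 − ∑_{k=0}^{n-1} w*_k K(x, k/n))² dx = 6n(n + 15)/(5(12n³ + n + 3)²). -/

import Mathlib

open MeasureTheory

/-- The reproducing kernel `K^1_{1,1}` of the first-order unweighted Sobolev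
space on `[0,1]`. -/
noncomputable def sobKernel (x y : ℝ) : ℝ :=
  1 + (x - 1/2) * (y - 1/2) + (|x - y| ^ 2 - |x - y| + 1/6) / 2

/-- The optimal kernel cubature weights for the left-Riemann nodes `t_k = k/n`. -/
noncomputable def wstar (n k : ℕ) : ℝ :=
  if k = 0 then 6 * (n : ℝ) ^ 2 / (12 * (n : ℝ) ^ 3 + n + 3)
  else if k = n - 1 then 18 * (n : ℝ) ^ 2 / (12 * (n : ℝ) ^ 3 + n + 3)
  else 12 * (n : ℝ) ^ 2 / (12 * (n : ℝ) ^ 3 + n + 3)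

/-!
Off the diagonal, `K(·, y)` is `x² / 2` plus an affine function, so the residual
`r = 1 - ∑ wₖ K(·, tₖ)` is, between consecutive nodes `a ≤ b`, a quadratic with leading coefficient
`-W / 2`, where `W = ∑ wₖ`. If `r` vanishes at the nodes, then `r x = W / 2 * (x - a) * (b - x)`
there. To the right of the last node `a` it is `W / 2 * (x - a) * (2 - a - x)`, because
`∂K/∂x (1, y) = 0` for `y < 1` forces the vertex of the parabola to be at `1`. Hence the `L²` norm
of `r` depends only on `W` and the mesh widths.
-/

theorem sobKernel_eq_sub_max (x y : ℝ) :
    sobKernel x y = 4 / 3 + (x ^ 2 + y ^ 2) / 2 - max x y := by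
  rw [sobKernel, sq_abs]
  linear_combination (max_sub_min_eq_abs' x y + max_add_min x y) / 2

theorem sub_mul_sobKernel_of_gap {a b x y : ℝ} (hax : a ≤ x) (hxb : x ≤ b) (hy : y ≤ a ∨ b ≤ y) :
    (b - a) * sobKernel x y = (b - x) * sobKernel a y + (x - a) * sobKernel b y
      - (b - a) * ((x - a) * (b - x) / 2) := by
  simp only [sobKernel_eq_sub_max]
  rcases hy with hya | hby
  · rw [max_eq_left (hya.trans hax), max_eq_left hya, max_eq_left (hya.trans (hax.trans hxb))]
    ring
  · rw [max_eq_right (hxb.trans hby), max_eq_right ((hax.trans hxb).trans hby), max_eq_right hby]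
    ring

theorem sobKernel_of_le_of_le {a x y : ℝ} (hya : y ≤ a) (hax : a ≤ x) :
    sobKernel x y = sobKernel a y - (x - a) * (2 - a - x) / 2 := by
  rw [sobKernel_eq_sub_max, sobKernel_eq_sub_max, max_eq_left (hya.trans hax), max_eq_left hya]
  ring

theorem integral_sq_sub_mul_sub (a b c : ℝ) :
    ∫ x in a..b, ((x - a) * (c - x)) ^ 2 =
      (c - a) ^ 2 * (b - a) ^ 3 / 3 - (c - a) * (b - a) ^ 4 / 2 + (b - a) ^ 5 / 5 := by
  let F : ℝ → ℝ := fun x =>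
    (c - a) ^ 2 * (x - a) ^ 3 / 3 - (c - a) * (x - a) ^ 4 / 2 + (x - a) ^ 5 / 5
  have hF (x : ℝ) : HasDerivAt F (((x - a) * (c - x)) ^ 2) x := by
    have hpow (k : ℕ) := ((hasDerivAt_id' x).sub_const a).pow k
    refine (((((hpow 3).const_mul ((c - a) ^ 2)).div_const 3).sub
      (((hpow 4).const_mul (c - a)).div_const 2)).add ((hpow 5).div_const 5)).congr_deriv ?_
    norm_num
    ring
  rw [intervalIntegral.integral_eq_sub_of_hasDerivAt (fun x _ => hF x)
    (Continuous.intervalIntegrable (by fun_prop) _ _)]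
  simp [F]

section Residual

variable {ι : Type*} {s : Finset ι} {w t : ι → ℝ}

/-- The error `1 - ∑ k ∈ s, w k * K(·, t k)` made in approximating the constant function `1` by the
kernel combination with nodes `t` and weights `w`. The combination is the kernel interpolant of `1`
precisely when the residual vanishes at every node. -/
noncomputable def kernelResidual (s : Finset ι) (w t : ι → ℝ) (x : ℝ) : ℝ :=
  1 - ∑ k ∈ s, w k * sobKernel x (t k)

theorem continuous_kernelResidual : Continuous (kernelResidual s w t) := by
  unfold kernelResidual sobKernel
  fun_prop

theorem kernelResidual_of_gap {a b x : ℝ} (hax : a ≤ x) (hxb : x ≤ b)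
    (hgap : ∀ k ∈ s, t k ≤ a ∨ b ≤ t k)
    (ha : kernelResidual s w t a = 0) (hb : kernelResidual s w t b = 0) :
    kernelResidual s w t x = (∑ k ∈ s, w k) / 2 * ((x - a) * (b - x)) := by
  obtain rfl | hab := (hax.trans hxb).eq_or_lt
  · obtain rfl := le_antisymm hax hxb
    simp [ha]
  have hsum : (b - a) * ∑ k ∈ s, w k * sobKernel x (t k) =
      (b - x) * ∑ k ∈ s, w k * sobKernel a (t k) + (x - a) * ∑ k ∈ s, w k * sobKernel b (t k)
        - (b - a) * ((x - a) * (b - x) / 2) * ∑ k ∈ s, w k := by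
    simp only [Finset.mul_sum, ← Finset.sum_add_distrib, ← Finset.sum_sub_distrib]
    refine Finset.sum_congr rfl fun k hk => ?_
    linear_combination w k * sub_mul_sobKernel_of_gap hax hxb (hgap k hk)
  rw [kernelResidual, sub_eq_zero] at ha hb
  rw [← ha, ← hb] at hsum
  refine mul_left_cancel₀ (sub_pos.2 hab).ne' ?_
  rw [kernelResidual]
  linear_combination -hsum

theorem kernelResidual_of_forall_le {a x : ℝ} (hs : ∀ k ∈ s, t k ≤ a) (hax : a ≤ x)
    (ha : kernelResidual s w t a = 0) :
    kernelResidual s w t x = (∑ k ∈ s, w k) / 2 * ((x - a) * (2 - a - x)) := by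
  have hsum : ∑ k ∈ s, w k * sobKernel x (t k) =
      ∑ k ∈ s, w k * sobKernel a (t k) - (x - a) * (2 - a - x) / 2 * ∑ k ∈ s, w k := by
    rw [Finset.mul_sum, ← Finset.sum_sub_distrib]
    refine Finset.sum_congr rfl fun k hk => ?_
    rw [sobKernel_of_le_of_le (hs k hk) hax]
    ring
  rw [kernelResidual] at ha ⊢
  linear_combination ha - hsum

theorem integral_kernelResidual_sq_of_gap {a b : ℝ} (hab : a ≤ b)
    (hgap : ∀ k ∈ s, t k ≤ a ∨ b ≤ t k)
    (ha : kernelResidual s w t a = 0) (hb : kernelResidual s w t b = 0) :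
    ∫ x in a..b, kernelResidual s w t x ^ 2 =
      ((∑ k ∈ s, w k) / 2) ^ 2 * ((b - a) ^ 5 / 30) := by
  have hcongr : ∫ x in a..b, kernelResidual s w t x ^ 2 =
      ∫ x in a..b, ((∑ k ∈ s, w k) / 2) ^ 2 * ((x - a) * (b - x)) ^ 2 := by
    refine intervalIntegral.integral_congr fun x hx => ?_
    obtain ⟨hax, hxb⟩ := Set.uIcc_of_le hab ▸ hx
    simp only [kernelResidual_of_gap hax hxb hgap ha hb, mul_pow]
  rw [hcongr, intervalIntegral.integral_const_mul, integral_sq_sub_mul_sub]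
  ring

theorem integral_kernelResidual_sq_of_forall_le {a : ℝ} (hs : ∀ k ∈ s, t k ≤ a) (ha1 : a ≤ 1)
    (ha : kernelResidual s w t a = 0) :
    ∫ x in a..1, kernelResidual s w t x ^ 2 =
      ((∑ k ∈ s, w k) / 2) ^ 2 * (8 * (1 - a) ^ 5 / 15) := by
  have hcongr : ∫ x in a..1, kernelResidual s w t x ^ 2 =
      ∫ x in a..1, ((∑ k ∈ s, w k) / 2) ^ 2 * ((x - a) * (2 - a - x)) ^ 2 := by
    refine intervalIntegral.integral_congr fun x hx => ?_
    have hax : a ≤ x := (Set.uIcc_of_le ha1 ▸ hx).1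
    simp only [kernelResidual_of_forall_le hs hax ha, mul_pow]
  rw [hcongr, intervalIntegral.integral_const_mul, integral_sq_sub_mul_sub]
  ring

end Residual

theorem integral_kernelResidual_sq {m : ℕ} {w t : ℕ → ℝ} (ht : Monotone t) (hm : t m ≤ 1)
    (hr : ∀ j ≤ m, kernelResidual (Finset.range (m + 1)) w t (t j) = 0) :
    ∫ x in t 0..1, kernelResidual (Finset.range (m + 1)) w t x ^ 2 =
      ((∑ k ∈ Finset.range (m + 1), w k) / 2) ^ 2 *
        (∑ j ∈ Finset.range m, (t (j + 1) - t j) ^ 5 / 30 + 8 * (1 - t m) ^ 5 / 15) := by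
  have hint (a b : ℝ) :
      IntervalIntegrable (fun x => kernelResidual (Finset.range (m + 1)) w t x ^ 2) volume a b :=
    (continuous_kernelResidual.pow 2).intervalIntegrable a b
  have hlast : ∀ k ∈ Finset.range (m + 1), t k ≤ t m := fun k hk =>
    ht (Finset.mem_range_succ_iff.1 hk)
  rw [← intervalIntegral.integral_add_adjacent_intervals (hint _ (t m)) (hint _ _),
    ← intervalIntegral.sum_integral_adjacent_intervals fun _ _ => hint _ _,
    integral_kernelResidual_sq_of_forall_le hlast hm (hr m le_rfl), mul_add, Finset.mul_sum]
  congr 1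
  refine Finset.sum_congr rfl fun j hj => ?_
  have hjm : j < m := Finset.mem_range.1 hj
  have hgap : ∀ k ∈ Finset.range (m + 1), t k ≤ t j ∨ t (j + 1) ≤ t k := fun k _ =>
    (le_or_gt k j).imp (fun h => ht h) (fun h => ht h)
  exact integral_kernelResidual_sq_of_gap (ht j.le_succ) hgap (hr j hjm.le) (hr (j + 1) hjm)

theorem integral_kernelResidual_sq_leftRiemann {n : ℕ} (hn : n ≠ 0) {w : ℕ → ℝ}
    (hr : ∀ j < n, kernelResidual (Finset.range n) w (fun k => (k : ℝ) / n) (j / n) = 0) :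
    ∫ x in (0 : ℝ)..1, kernelResidual (Finset.range n) w (fun k => (k : ℝ) / n) x ^ 2 =
      ((∑ k ∈ Finset.range n, w k) / 2) ^ 2 * ((n + 15) / (30 * n ^ 5)) := by
  obtain ⟨m, rfl⟩ := Nat.exists_eq_succ_of_ne_zero hn
  let t : ℕ → ℝ := fun k => k / (m + 1 : ℕ)
  have ht : Monotone t := fun i j hij => by
    simp only [t]
    gcongr
  have hmesh (j : ℕ) : t (j + 1) - t j = 1 / (m + 1 : ℕ) := by
    simp only [t, Nat.cast_add_one, ← sub_div, add_sub_cancel_left]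
  have hstart : t 0 = 0 := by simp [t]
  have hend : t (m + 1) = 1 := div_self (Nat.cast_ne_zero.2 hn)
  have hlast : 1 - t m = 1 / (m + 1 : ℕ) := hend ▸ hmesh m
  calc
    _ = ((∑ k ∈ Finset.range (m + 1), w k) / 2) ^ 2 *
          (∑ j ∈ Finset.range m, (t (j + 1) - t j) ^ 5 / 30 + 8 * (1 - t m) ^ 5 / 15) :=
      hstart ▸ integral_kernelResidual_sq ht (hend ▸ ht m.le_succ) fun j hj =>
        hr j (Nat.lt_succ_of_le hj)
    _ = _ := by
      simp only [hmesh, hlast, Finset.sum_const, Finset.card_range, nsmul_eq_mul]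
      push_cast
      field_simp
      ring

theorem sum_range_max_natCast {𝕜 : Type*} [Field 𝕜] [LinearOrder 𝕜] [IsStrictOrderedRing 𝕜]
    {j n : ℕ} (hjn : j < n) :
    ∑ k ∈ Finset.range n, max (j : 𝕜) k = (n * (n - 1) + j * (j + 1)) / 2 := by
  induction n, hjn using Nat.le_induction with
  | base =>
    have hmax : ∀ k ∈ Finset.range (j + 1), max (j : 𝕜) k = j := fun k hk =>
      max_eq_left (Nat.cast_le.2 (Finset.mem_range_succ_iff.1 hk))
    rw [Finset.sum_congr rfl hmax, Finset.sum_const, Finset.card_range, nsmul_eq_mul]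
    push_cast
    ring
  | succ n hjn ih =>
    rw [Finset.sum_range_succ, ih, max_eq_right (Nat.cast_le.2 (Nat.le_of_succ_le hjn))]
    push_cast
    ring

theorem sum_range_natCast_sq {𝕜 : Type*} [Field 𝕜] [CharZero 𝕜] (n : ℕ) :
    ∑ k ∈ Finset.range n, (k : 𝕜) ^ 2 = n * (n - 1) * (2 * n - 1) / 6 := by
  induction n with
  | zero => simp
  | succ n ih =>
    rw [Finset.sum_range_succ, ih]
    push_cast
    ring

theorem sobKernel_div_div (n j k : ℕ) :
    sobKernel (j / n) (k / n) =
      4 / 3 + (j ^ 2 + k ^ 2) / (2 * n ^ 2) - max (j : ℝ) k / n := by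
  rw [sobKernel_eq_sub_max, max_div_div_right (Nat.cast_nonneg n)]
  ring

theorem sum_sobKernel_div_div {n j : ℕ} (hj : j < n) :
    ∑ k ∈ Finset.range n, sobKernel (j / n) (k / n) = n + 1 / 4 + (1 - 6 * j) / (12 * n) := by
  have hn' : (n : ℝ) ≠ 0 := Nat.cast_ne_zero.2 (Nat.ne_zero_of_lt hj)
  simp only [sobKernel_div_div, Finset.sum_sub_distrib, Finset.sum_add_distrib,
    ← Finset.sum_div, sum_range_max_natCast hj, sum_range_natCast_sq, Finset.sum_const,
    Finset.card_range, nsmul_eq_mul]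
  field_simp
  ring

theorem sum_wstar_mul {n : ℕ} (hn : 2 ≤ n) (f : ℕ → ℝ) :
    ∑ k ∈ Finset.range n, wstar n k * f k =
      12 * (n : ℝ) ^ 2 / (12 * (n : ℝ) ^ 3 + n + 3) *
        (∑ k ∈ Finset.range n, f k - f 0 / 2 + f (n - 1) / 2) := by
  have hw (k : ℕ) : wstar n k * f k = 12 * (n : ℝ) ^ 2 / (12 * (n : ℝ) ^ 3 + n + 3) *
      (f k - (if k = 0 then f k / 2 else 0) + (if k = n - 1 then f k / 2 else 0)) := by
    unfold wstar
    split_ifs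
    · omega
    all_goals ring
  have hfirst : 0 ∈ Finset.range n := Finset.mem_range.2 (by omega)
  have hlast : n - 1 ∈ Finset.range n := Finset.mem_range.2 (by omega)
  simp only [hw, ← Finset.mul_sum, Finset.sum_add_distrib, Finset.sum_sub_distrib,
    Finset.sum_ite_eq', if_pos hfirst, if_pos hlast]

theorem sum_wstar {n : ℕ} (hn : 2 ≤ n) :
    ∑ k ∈ Finset.range n, wstar n k = 12 * (n : ℝ) ^ 3 / (12 * (n : ℝ) ^ 3 + n + 3) := by
  have h := sum_wstar_mul hn fun _ => 1
  simp only [mul_one, Finset.sum_const, Finset.card_range, nsmul_eq_mul, sub_add_cancel] at h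
  rw [h]
  ring

theorem kernelResidual_wstar_eq_zero {n j : ℕ} (hn : 2 ≤ n) (hj : j < n) :
    kernelResidual (Finset.range n) (wstar n) (fun k => (k : ℝ) / n) (j / n) = 0 := by
  have hn' : (n : ℝ) ≠ 0 := Nat.cast_ne_zero.2 (by omega)
  have hmax : max (j : ℝ) (n - 1 : ℕ) = n - 1 := by
    rw [max_eq_right (Nat.cast_le.2 (Nat.le_sub_one_of_lt hj)), Nat.cast_pred (by omega)]
  rw [kernelResidual, sum_wstar_mul hn, sum_sobKernel_div_div hj, sobKernel_div_div,
    sobKernel_div_div, hmax, Nat.cast_pred (by omega), Nat.cast_zero,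
    max_eq_left (Nat.cast_nonneg j)]
  field_simp
  ring

/-- Proof of Lemma 2: `‖h − h_T^{w*}‖²_{L²(0,1)} = 6n(n+15)/(5(12n³+n+3)²)`. -/
theorem stmt_15 (n : ℕ) (hn : 2 ≤ n) :
    ∫ x in (0 : ℝ)..1,
        (1 - ∑ k ∈ Finset.range n, wstar n k * sobKernel x ((k : ℝ) / n)) ^ 2
      = 6 * (n : ℝ) * (n + 15) / (5 * (12 * (n : ℝ) ^ 3 + n + 3) ^ 2) := by
  have hn0 : n ≠ 0 := by omega
  calc
    _ = ((∑ k ∈ Finset.range n, wstar n k) / 2) ^ 2 * (((n : ℝ) + 15) / (30 * n ^ 5)) :=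
      integral_kernelResidual_sq_leftRiemann hn0 fun _ hj => kernelResidual_wstar_eq_zero hn hj
    _ = _ := by
      have hn' : (n : ℝ) ≠ 0 := Nat.cast_ne_zero.2 hn0
      rw [sum_wstar hn]
      field_simp
      ring
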